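/- Let R be an associative ring with identity and Q a quiver. If X ∈ Rep(Q,R) lies in Φ(GF(R)), then its character representation X⁺ = Hom(X, Q/Z) ∈ Rep(Q^op,R^op) lies in Ψ(GI(R^op)): for each vertex i, the canonical map ψ_i^{X⁺} : X⁺(i) → Π_{a∈Q_1, t(a)=i} X⁺(s(a)) is surjective, and the right R-modules X⁺(i) and Ker(ψ_i^{X⁺}) are Gorenstein injective. -/

import Mathlib

open CategoryTheory CategoryTheory.Limits Opposite
open scoped DirectSum

universe w v u

namespace QuiverGF


section Cat

variable {A : Type u} [Category.{v} A] [Abelian A]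

/-- `Ext¹(X,Y) = 0`, expressed as: every short exact sequence `0 → Y → E → X → 0` splits. -/
def ext1Zero (X Y : A) : Prop :=
  ∀ (E : A) (f : Y ⟶ E) (g : E ⟶ X) (w : f ≫ g = 0),
    (ShortComplex.mk f g w).ShortExact → ∃ s : X ⟶ E, s ≫ g = 𝟙 X

/-- `extHigherZero n X Y` encodes `Ext^{n+1}(X,Y) = 0`, defined by dimension shifting along
short exact sequences `0 → Y → I → Z → 0` with `I` injective. -/
def extHigherZero : ℕ → A → A → Prop
  | 0 => fun X Y => ext1Zero X Y
  | n + 1 => fun X Y => ∀ (I Z : A) (f : Y ⟶ I) (g : I ⟶ Z) (w : f ≫ g = 0),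
      Injective I → (ShortComplex.mk f g w).ShortExact → extHigherZero n X Z

/-- The right `Ext¹`-orthogonal class. -/
def rightPerp (S : Set A) : Set A := {Y | ∀ X ∈ S, ext1Zero X Y}

/-- The left `Ext¹`-orthogonal class. -/
def leftPerp (S : Set A) : Set A := {X | ∀ Y ∈ S, ext1Zero X Y}

/-- `(X, Y)` is a cotorsion pair. -/
structure IsCotorsionPair (X Y : Set A) : Prop where
  right_eq : Y = rightPerp X
  left_eq : X = leftPerp Y

/-- Completeness of a pair of classes: every object admits approximation sequences. -/
def IsCompleteCP (X Y : Set A) : Prop :=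
  (∀ M : A, ∃ (YM XM : A) (f : M ⟶ YM) (g : YM ⟶ XM) (w : f ≫ g = 0),
     (ShortComplex.mk f g w).ShortExact ∧ YM ∈ Y ∧ XM ∈ X) ∧
  (∀ M : A, ∃ (YM XM : A) (f : YM ⟶ XM) (g : XM ⟶ M) (w : f ≫ g = 0),
     (ShortComplex.mk f g w).ShortExact ∧ YM ∈ Y ∧ XM ∈ X)

/-- Heredity: `Ext^i(X,Y) = 0` for all `i ≥ 1`. -/
def IsHereditaryCP (X Y : Set A) : Prop :=
  ∀ M ∈ X, ∀ N ∈ Y, ∀ n : ℕ, extHigherZero n M N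

/-- A thick class of objects. -/
structure IsThick (W : Set A) : Prop where
  summand : ∀ Z ∈ W, ∀ (X : A) (i : X ⟶ Z) (r : Z ⟶ X), i ≫ r = 𝟙 X → X ∈ W
  ext_closed : ∀ (S : ShortComplex A), S.ShortExact → S.X₁ ∈ W → S.X₃ ∈ W → S.X₂ ∈ W
  ker_epi : ∀ (S : ShortComplex A), S.ShortExact → S.X₂ ∈ W → S.X₃ ∈ W → S.X₁ ∈ W
  coker_mono : ∀ (S : ShortComplex A), S.ShortExact → S.X₁ ∈ W → S.X₂ ∈ W → S.X₃ ∈ W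

/-- A Hovey triple. -/
structure IsHoveyTriple (C W F : Set A) : Prop where
  thick : IsThick W
  cp1 : IsCotorsionPair C (W ∩ F)
  cp1_complete : IsCompleteCP C (W ∩ F)
  cp2 : IsCotorsionPair (C ∩ W) F
  cp2_complete : IsCompleteCP (C ∩ W) F

/-- A hereditary Hovey triple. -/
structure IsHereditaryHoveyTriple (C W F : Set A) extends IsHoveyTriple C W F : Prop where
  cp1_hereditary : IsHereditaryCP C (W ∩ F)
  cp2_hereditary : IsHereditaryCP (C ∩ W) F

/-- `f : C ⟶ M` is an `S`-cover of `M`. -/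
def IsCover (S : Set A) {C M : A} (f : C ⟶ M) : Prop :=
  C ∈ S ∧ (∀ C' ∈ S, ∀ g : C' ⟶ M, ∃ h : C' ⟶ C, h ≫ f = g) ∧
    (∀ h : C ⟶ C, h ≫ f = f → IsIso h)

/-- `f : M ⟶ E` is an `S`-envelope of `M`. -/
def IsEnvelope (S : Set A) {M E : A} (f : M ⟶ E) : Prop :=
  E ∈ S ∧ (∀ E' ∈ S, ∀ g : M ⟶ E', ∃ h : E ⟶ E', f ≫ h = g) ∧
    (∀ h : E ⟶ E, f ≫ h = f → IsIso h)

/-- A perfect pair of classes: X-covers and Y-envelopes always exist. -/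
def IsPerfectCP (X Y : Set A) : Prop :=
  (∀ M : A, ∃ (C : A) (f : C ⟶ M), IsCover X f) ∧
  (∀ M : A, ∃ (E : A) (f : M ⟶ E), IsEnvelope Y f)

/-- `W` is a cogenerator for `X`. -/
def IsCogenerator (W X : Set A) : Prop :=
  W ⊆ X ∧ ∀ M ∈ X, ∃ (W' X' : A) (f : M ⟶ W') (g : W' ⟶ X') (w : f ≫ g = 0),
    (ShortComplex.mk f g w).ShortExact ∧ W' ∈ W ∧ X' ∈ X

end Cat

section Quiver

variable (V : Type w) [Quiver.{w} V]

/-- A quiver is left rooted if it has no infinite sequence of arrows `• → • → • → ⋯`. -/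
def LeftRooted : Prop := ¬ ∃ f : ℕ → V, ∀ n : ℕ, Nonempty (f n ⟶ f (n + 1))

variable {V}
variable {A : Type u} [Category.{v} A]

/-- A vertex of `V`, seen as an object of the path category. -/
abbrev vtx (i : V) : Paths V := i

section Phi

variable [Abelian A] [HasCoproducts.{w} A]

/-- The canonical morphism `φᵢˣ : ⊕_{a : j ⟶ i} X(j) ⟶ X(i)`. -/
noncomputable def phi (X : Paths V ⥤ A) (i : V) :
    (∐ fun p : Σ j : V, j ⟶ i => X.obj (vtx p.1)) ⟶ X.obj (vtx i) :=
  Sigma.desc fun p => X.map p.2.toPath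

/-- The class `Φ(S)` of representations. -/
noncomputable def PhiClass (S : Set A) : Set (Paths V ⥤ A) :=
  {X | ∀ i : V, Mono (phi X i) ∧ X.obj (vtx i) ∈ S ∧ cokernel (phi X i) ∈ S}

end Phi

/-- The class of representations with all vertex values in `S`. -/
def RepClass (S : Set A) : Set (Paths V ⥤ A) := {X | ∀ i : V, X.obj (vtx i) ∈ S}

section Psi

variable [Abelian A] [HasProducts.{w} A]

/-- The canonical morphism `ψᵢʸ : Y(i) ⟶ Π_{a : i ⟶ j} Y(j)`. -/
noncomputable def psi (Y : Paths V ⥤ A) (i : V) :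
    Y.obj (vtx i) ⟶ ∏ᶜ fun p : Σ j : V, i ⟶ j => Y.obj (vtx p.1) :=
  Pi.lift fun p => Y.map p.2.toPath

/-- The class `Ψ(S)` of representations. -/
noncomputable def PsiClass (S : Set A) : Set (Paths V ⥤ A) :=
  {Y | ∀ i : V, Epi (psi Y i) ∧ Y.obj (vtx i) ∈ S ∧ kernel (psi Y i) ∈ S}

end Psi

end Quiver




attribute [-instance] Submodule.Quotient.addCommMonoid

section NcTensor

variable (R : Type u) [Ring R]

variable (E : Type u) [AddCommGroup E] [Module Rᵐᵒᵖ E]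
variable (M : Type u) [AddCommGroup M] [Module R M]

/-- The defining relations of the tensor product `E ⊗_R M` of a right `R`-module `E`
and a left `R`-module `M` over a (possibly noncommutative) ring `R`. -/
def ncRel : Submodule ℤ (TensorProduct ℤ E M) :=
  Submodule.span ℤ {z | ∃ (e : E) (r : R) (m : M),
    z = (MulOpposite.op r • e) ⊗ₜ[ℤ] m - e ⊗ₜ[ℤ] (r • m)}

/-- The tensor product `E ⊗_R M` of a right `R`-module `E` and a left `R`-module `M`. -/
abbrev NcTensor := TensorProduct ℤ E M ⧸ ncRel R E M

/-- The canonical generator `e ⊗ m` of `E ⊗_R M`. -/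
noncomputable def NcTensor.tmul (e : E) (m : M) : NcTensor R E M :=
  Submodule.Quotient.mk (e ⊗ₜ[ℤ] m)

variable {E M}
variable {E' : Type u} [AddCommGroup E'] [Module Rᵐᵒᵖ E']
variable {M' : Type u} [AddCommGroup M'] [Module R M']

/-- Functoriality of the tensor product. -/
noncomputable def NcTensor.map (f : E →ₗ[Rᵐᵒᵖ] E') (g : M →ₗ[R] M') :
    NcTensor R E M →ₗ[ℤ] NcTensor R E' M' :=
  Submodule.mapQ _ _
    (TensorProduct.map f.toAddMonoidHom.toIntLinearMap g.toAddMonoidHom.toIntLinearMap)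
    (by
      refine Submodule.span_le.2 ?_
      rintro z ⟨e, r, m, rfl⟩
      refine Submodule.mem_comap.2 (Submodule.subset_span ?_)
      exact ⟨f e, r, g m, by
        erw [map_sub, TensorProduct.map_tmul, TensorProduct.map_tmul]
        simp⟩)

@[simp] lemma NcTensor.map_tmul (f : E →ₗ[Rᵐᵒᵖ] E') (g : M →ₗ[R] M') (e : E) (m : M) :
    NcTensor.map R f g (NcTensor.tmul R E M e m) = NcTensor.tmul R E' M' (f e) (g m) := by
  rfl

end NcTensor

section ModuleClasses

variable (R : Type u) [Ring R]

/-- A left `R`-module is flat if tensoring with it preserves injections of right `R`-modules. -/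
def IsFlatModule (M : ModuleCat.{u} R) : Prop :=
  ∀ (E E' : ModuleCat.{u} Rᵐᵒᵖ) (f : E ⟶ E'), Function.Injective f →
    Function.Injective (NcTensor.map R (f.hom : ↑E →ₗ[Rᵐᵒᵖ] ↑E') (LinearMap.id (M := ↑M)))

/-- Gorenstein flat left `R`-modules: cycles of exact complexes of flat modules which stay
exact after tensoring with any injective right `R`-module. -/
def IsGorensteinFlatModule (M : ModuleCat.{u} R) : Prop :=
  ∃ (F : ℤ → ModuleCat.{u} R) (d : ∀ n : ℤ, F n ⟶ F (n + 1)),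
    (∀ n, IsFlatModule R (F n)) ∧
    (∀ n, Function.Exact (d n) (d (n + 1))) ∧
    Nonempty (↑M ≃ₗ[R] ↥(LinearMap.ker ((d 0).hom : ↑(F 0) →ₗ[R] ↑(F (0 + 1))))) ∧
    ∀ (E : ModuleCat.{u} Rᵐᵒᵖ), Injective E → ∀ n : ℤ,
      Function.Exact (NcTensor.map R (LinearMap.id (M := ↑E)) ((d n).hom : ↑(F n) →ₗ[R] ↑(F (n + 1))))
        (NcTensor.map R (LinearMap.id (M := ↑E)) ((d (n + 1)).hom : ↑(F (n + 1)) →ₗ[R] ↑(F (n + 1 + 1))))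

/-- Projectively coresolved Gorenstein flat left `R`-modules. -/
def IsPGFModule (M : ModuleCat.{u} R) : Prop :=
  ∃ (P : ℤ → ModuleCat.{u} R) (d : ∀ n : ℤ, P n ⟶ P (n + 1)),
    (∀ n, Projective (P n)) ∧
    (∀ n, Function.Exact (d n) (d (n + 1))) ∧
    Nonempty (↑M ≃ₗ[R] ↥(LinearMap.ker ((d 0).hom : ↑(P 0) →ₗ[R] ↑(P (0 + 1))))) ∧
    ∀ (E : ModuleCat.{u} Rᵐᵒᵖ), Injective E → ∀ n : ℤ,
      Function.Exact (NcTensor.map R (LinearMap.id (M := ↑E)) ((d n).hom : ↑(P n) →ₗ[R] ↑(P (n + 1))))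
        (NcTensor.map R (LinearMap.id (M := ↑E)) ((d (n + 1)).hom : ↑(P (n + 1)) →ₗ[R] ↑(P (n + 1 + 1))))

/-- Gorenstein injective objects of an abelian category. -/
def IsGorensteinInjective {A : Type*} [Category A] [Abelian A] (M : A) : Prop :=
  ∃ (I : ℤ → A) (d : ∀ n : ℤ, I n ⟶ I (n + 1)),
    (∀ n, Injective (I n)) ∧
    (∀ n, ∃ w : d n ≫ d (n + 1) = 0, (ShortComplex.mk (d n) (d (n + 1)) w).Exact) ∧
    Nonempty (M ≅ kernel (d 0)) ∧
    ∀ (E : A), Injective E → ∀ n : ℤ,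
      Function.Exact (fun f : E ⟶ I n => f ≫ d n) (fun f : E ⟶ I (n + 1) => f ≫ d (n + 1))

end ModuleClasses



section Char

variable (R : Type u) [Ring R] (G : Type u) [AddCommGroup G]

section Left
variable (M : Type u) [AddCommGroup M] [Module R M]

/-- Right `R`-action on `Hom_ℤ(M, G)` for a left `R`-module `M`. -/
instance : SMul Rᵐᵒᵖ (M →+ G) :=
  ⟨fun r f => f.comp (DistribMulAction.toAddMonoidHom M r.unop)⟩

@[simp] lemma op_smul_addHom_apply (r : Rᵐᵒᵖ) (f : M →+ G) (m : M) :
    (r • f) m = f (r.unop • m) := rfl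

instance charRight : Module Rᵐᵒᵖ (M →+ G) where
  one_smul f := AddMonoidHom.ext fun m => by simp
  mul_smul r s f := AddMonoidHom.ext fun m => by simp [mul_smul]
  smul_zero r := AddMonoidHom.ext fun m => rfl
  smul_add r f g := AddMonoidHom.ext fun m => rfl
  add_smul r s f := AddMonoidHom.ext fun m => by simp [add_smul]
  zero_smul f := AddMonoidHom.ext fun m => by simp

end Left

section Right
variable (N : Type u) [AddCommGroup N] [Module Rᵐᵒᵖ N]

/-- Left `R`-action on `Hom_ℤ(N, G)` for a right `R`-module `N`. -/
instance : SMul R (N →+ G) :=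
  ⟨fun r f => f.comp (DistribMulAction.toAddMonoidHom N (MulOpposite.op r))⟩

@[simp] lemma smul_addHom_apply (r : R) (f : N →+ G) (n : N) :
    (r • f) n = f (MulOpposite.op r • n) := rfl

instance charLeft : Module R (N →+ G) where
  one_smul f := AddMonoidHom.ext fun n => by simp
  mul_smul r s f := AddMonoidHom.ext fun n => by simp [MulOpposite.op_mul, mul_smul]
  smul_zero r := AddMonoidHom.ext fun n => rfl
  smul_add r f g := AddMonoidHom.ext fun n => rfl
  add_smul r s f := AddMonoidHom.ext fun n => by simp [add_smul]
  zero_smul f := AddMonoidHom.ext fun n => by simp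

end Right

section Precomp

variable {R G}
variable {M N : Type u} [AddCommGroup M] [AddCommGroup N] [Module R M] [Module R N]

/-- Precomposition, as an `Rᵐᵒᵖ`-linear map between character modules. -/
def precompHom (h : M →ₗ[R] N) : (N →+ G) →ₗ[Rᵐᵒᵖ] (M →+ G) where
  toFun f := f.comp h.toAddMonoidHom
  map_add' f g := rfl
  map_smul' r f := AddMonoidHom.ext fun m => by simp [map_smul]

variable {P Q : Type u} [AddCommGroup P] [AddCommGroup Q] [Module Rᵐᵒᵖ P] [Module Rᵐᵒᵖ Q]

/-- Precomposition, as an `R`-linear map between character modules of right modules. -/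
def precompHomOp (h : P →ₗ[Rᵐᵒᵖ] Q) : (Q →+ G) →ₗ[R] (P →+ G) where
  toFun f := f.comp h.toAddMonoidHom
  map_add' f g := rfl
  map_smul' r f := AddMonoidHom.ext fun p => by simp [map_smul]

end Precomp

end Char


section Reps

variable (V : Type u) [Quiver.{u} V] (R : Type u) [Ring R]

/-- The category of representations of the quiver `V` with values in left `R`-modules. -/
abbrev RepL := Paths V ⥤ ModuleCat.{u} R

/-- The category of representations of the opposite quiver with values in right `R`-modules. -/
abbrev RepR := Paths Vᵒᵖ ⥤ ModuleCat.{u} Rᵐᵒᵖ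

/-- A vertex of `V`, seen as an object of the path category. -/
abbrev vtx' {V : Type u} [Quiver.{u} V] (i : V) : Paths V := i

/-- The representation `Hom(X, G) ∈ Rep(Qᵒᵖ, Rᵒᵖ)`, given vertexwise by `Hom_ℤ(X(i), G)`. -/
noncomputable def HomRepObj (X : RepL V R) (G : Type u) [AddCommGroup G] : RepR V R :=
  Paths.lift
    { obj := fun x => ModuleCat.of Rᵐᵒᵖ (↑(X.obj (vtx' x.unop)) →+ G)
      map := fun {x y} a =>
        ModuleCat.ofHom (precompHom (G := G) ((X.map a.unop.toPath).hom : ↑(X.obj (vtx' y.unop)) →ₗ[R] ↑(X.obj (vtx' x.unop))) :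
          _ →ₗ[Rᵐᵒᵖ] _) }

/-- The representation `Hom(Y, G) ∈ Rep(Q, R)` for `Y ∈ Rep(Qᵒᵖ, Rᵒᵖ)`. -/
noncomputable def HomRepObjOp (Y : RepR V R) (G : Type u) [AddCommGroup G] : RepL V R :=
  Paths.lift
    { obj := fun i => ModuleCat.of R (↑(Y.obj (vtx' (op i))) →+ G)
      map := fun {i j} a =>
        ModuleCat.ofHom (precompHomOp (G := G) ((Y.map a.op.toPath).hom : ↑(Y.obj (vtx' (op j))) →ₗ[Rᵐᵒᵖ] ↑(Y.obj (vtx' (op i)))) :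
          _ →ₗ[R] _) }

/-- The character representation `X⁺ = Hom(X, ℚ/ℤ)`. -/
noncomputable def charRep (X : RepL V R) : RepR V R :=
  HomRepObj V R X (ULift.{u} (AddCircle (1 : ℚ)))

section Tensor

variable {V R}

/-- The underlying group of the tensor product of representations before dividing out
by the relations coming from arrows. -/
noncomputable abbrev repTensorBase (Y : RepR V R) (X : RepL V R) : Type u :=
  ⨁ (i : V), NcTensor R (↑(Y.obj (vtx' (op i)))) (↑(X.obj (vtx' i)))

open scoped Classical in
/-- The relations defining the tensor product of representations. -/
noncomputable def repTensorRel (Y : RepR V R) (X : RepL V R) :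
    Submodule ℤ (repTensorBase Y X) :=
  Submodule.span ℤ {z | ∃ (i j : V) (a : i ⟶ j) (y : ↑(Y.obj (vtx' (op j)))) (x : ↑(X.obj (vtx' i))),
    z = DirectSum.of _ i (NcTensor.tmul R _ _ (Y.map a.op.toPath y) x)
      - DirectSum.of _ j (NcTensor.tmul R _ _ y (X.map a.toPath x))}

/-- The tensor product `Y ⊗_Q X` of representations, for `Y ∈ Rep(Qᵒᵖ, Rᵒᵖ)` and
`X ∈ Rep(Q, R)`. -/
noncomputable abbrev RepTensor (Y : RepR V R) (X : RepL V R) : Type u :=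
  repTensorBase Y X ⧸ repTensorRel Y X

open scoped Classical in
/-- Functoriality of the tensor product of representations. -/
noncomputable def RepTensor.map {Y Y' : RepR V R} {X X' : RepL V R}
    (g : Y ⟶ Y') (f : X ⟶ X') : RepTensor Y X →ₗ[ℤ] RepTensor Y' X' :=
  Submodule.mapQ _ _
    (DirectSum.toModule ℤ V (repTensorBase Y' X') fun i =>
      (DirectSum.lof ℤ V _ i).comp
        (NcTensor.map R ((g.app (vtx' (op i))).hom : _ →ₗ[Rᵐᵒᵖ] _) ((f.app (vtx' i)).hom : _ →ₗ[R] _)))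
    (by
      refine Submodule.span_le.2 ?_
      rintro z ⟨i, j, a, y, x, rfl⟩
      refine Submodule.mem_comap.2 ?_
      rw [map_sub, ← DirectSum.lof_eq_of ℤ, ← DirectSum.lof_eq_of ℤ,
        DirectSum.toModule_lof, DirectSum.toModule_lof]
      refine Submodule.subset_span ?_
      refine ⟨i, j, a, g.app (vtx' (op j)) y, f.app (vtx' i) x, ?_⟩
      have hg : g.app (vtx' (op i)) (Y.map a.op.toPath y)
          = Y'.map a.op.toPath (g.app (vtx' (op j)) y) := by
        have h := g.naturality (a.op.toPath : vtx' (op j) ⟶ vtx' (op i))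
        exact LinearMap.congr_fun (congrArg ModuleCat.Hom.hom h) y
      have hf : f.app (vtx' j) (X.map a.toPath x)
          = X'.map a.toPath (f.app (vtx' i) x) := by
        have h := f.naturality (a.toPath : vtx' i ⟶ vtx' j)
        exact LinearMap.congr_fun (congrArg ModuleCat.Hom.hom h) x
      simp only [LinearMap.comp_apply, NcTensor.map_tmul, DirectSum.lof_eq_of]
      rw [hg, hf])

end Tensor

end Reps




section More

variable (V : Type u) [Quiver.{u} V] (R : Type u) [Ring R]

/-- Cotorsion left `R`-modules. -/
def IsCotorsionModule (M : ModuleCat.{u} R) : Prop :=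
  ∀ F : ModuleCat.{u} R, IsFlatModule R F → ext1Zero F M

/-- A right coherent ring: every finitely generated right ideal is finitely presented. -/
def RightCoherent : Prop :=
  ∀ I : Submodule Rᵐᵒᵖ R, I.FG → Module.FinitePresentation Rᵐᵒᵖ ↥I

/-- Flat representations: colimits of projective representations. -/
def IsFlatRep (Xr : RepL V R) : Prop :=
  ∃ (J : Cat.{u, u}) (D : ↥J ⥤ RepL V R) (c : Limits.Cocone D),
    (∀ j, Projective (D.obj j)) ∧ Nonempty (Limits.IsColimit c) ∧ Nonempty (c.pt ≅ Xr)

/-- Gorenstein flat representations. -/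
def IsGorensteinFlatRep (Xr : RepL V R) : Prop :=
  ∃ (F : ℤ → RepL V R) (d : ∀ n : ℤ, F (n + 1) ⟶ F n),
    (∀ n, IsFlatRep V R (F n)) ∧
    (∀ n, ∃ w : d (n + 1) ≫ d n = 0, (ShortComplex.mk (d (n + 1)) (d n) w).Exact) ∧
    Nonempty (Xr ≅ cokernel (d 0)) ∧
    ∀ (E : RepR V R), Injective E → ∀ n : ℤ,
      Function.Exact (RepTensor.map (𝟙 E) (d (n + 1))) (RepTensor.map (𝟙 E) (d n))

/-- Projectively coresolved Gorenstein flat representations. -/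
def IsPGFRep (Xr : RepL V R) : Prop :=
  ∃ (P : ℤ → RepL V R) (d : ∀ n : ℤ, P (n + 1) ⟶ P n),
    (∀ n, Projective (P n)) ∧
    (∀ n, ∃ w : d (n + 1) ≫ d n = 0, (ShortComplex.mk (d (n + 1)) (d n) w).Exact) ∧
    Nonempty (Xr ≅ cokernel (d 0)) ∧
    ∀ (E : RepR V R), Injective E → ∀ n : ℤ,
      Function.Exact (RepTensor.map (𝟙 E) (d (n + 1))) (RepTensor.map (𝟙 E) (d n))

end More

section Swap

variable (R : Type u) [Ring R]
variable (M : Type u) [AddCommGroup M] [Module R M]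
variable (E : Type u) [AddCommGroup E] [Module Rᵐᵒᵖ E]

/-- Relations for the tensor product `M ⊗_{Rᵒᵖ} E` of a right `Rᵒᵖ`-module `M`
and a left `Rᵒᵖ`-module `E`. -/
def ncRel' : Submodule ℤ (TensorProduct ℤ M E) :=
  Submodule.span ℤ {z | ∃ (m : M) (r : R) (e : E),
    z = (r • m) ⊗ₜ[ℤ] e - m ⊗ₜ[ℤ] (MulOpposite.op r • e)}

/-- The tensor product `M ⊗_{Rᵒᵖ} E`. -/
abbrev NcTensorSwap := TensorProduct ℤ M E ⧸ ncRel' R M E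

variable {M E}

/-- The generator `m ⊗ e` of `M ⊗_{Rᵒᵖ} E`. -/
noncomputable def NcTensorSwap.tmul (m : M) (e : E) : NcTensorSwap R M E :=
  Submodule.Quotient.mk (m ⊗ₜ[ℤ] e)

variable (V : Type u) [Quiver.{u} V]

/-- The base of the tensor product `X ⊗_{Qᵒᵖ} Y`. -/
noncomputable abbrev repTensorSwapBase (X : RepL V R) (Y : RepR V R) : Type u :=
  ⨁ (i : V), NcTensorSwap R (↑(X.obj i)) (↑(Y.obj (op i)))

open scoped Classical in
/-- The relations of the tensor product `X ⊗_{Qᵒᵖ} Y`. -/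
noncomputable def repTensorSwapRel (X : RepL V R) (Y : RepR V R) :
    Submodule ℤ (repTensorSwapBase R V X Y) :=
  Submodule.span ℤ {z | ∃ (j i : V) (a : j ⟶ i) (x : ↑(X.obj j)) (y : ↑(Y.obj (op i))),
    z = DirectSum.of _ i (NcTensorSwap.tmul R (X.map a.toPath x) y)
      - DirectSum.of _ j (NcTensorSwap.tmul R x (Y.map a.op.toPath y))}

/-- The tensor product `X ⊗_{Qᵒᵖ} Y` of representations, i.e. the tensor product over the
opposite quiver of the opposite ring. -/
noncomputable abbrev RepTensorSwap (X : RepL V R) (Y : RepR V R) : Type u :=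
  repTensorSwapBase R V X Y ⧸ repTensorSwapRel R V X Y

end Swap

section Eval

variable {V : Type u} [Quiver.{u} V] {R : Type u} [Ring R]

/-- Evaluation helper identifying the vertex value of `Hom(X, G)` with `Hom_ℤ(X(i), G)`. -/
def homRepEval (X : RepL V R) (G : Type u) [AddCommGroup G] {v : Vᵒᵖ}
    (s : ↑((HomRepObj V R X G).obj v)) : ↑(X.obj v.unop) →+ G := s

/-- Evaluation helper identifying the vertex value of `Hom(Y, G)` with `Hom_ℤ(Y(i), G)`. -/
def homRepOpEval (Y : RepR V R) (G : Type u) [AddCommGroup G] {i : V}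
    (s : ↑((HomRepObjOp V R Y G).obj i)) : ↑(Y.obj (op i)) →+ G := s

end Eval

end QuiverGF

namespace QuiverGF

section Helpers

abbrev DQ : Type u := ULift.{u} (AddCircle (1 : ℚ))

lemma dq_extend {A B : Type u} [AddCommGroup A] [AddCommGroup B] (f : A →+ B)
    (hf : Function.Injective f) (g : A →+ DQ.{u}) : ∃ h : B →+ DQ.{u}, h.comp f = g := by
  let g' : A →+ AddCircle (1 : ℚ) := AddEquiv.ulift.toAddMonoidHom.comp g
  obtain ⟨h', hh⟩ := CharacterModule.dual_surjective_of_injective (f.toIntLinearMap) hf g'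
  refine ⟨AddEquiv.ulift.symm.toAddMonoidHom.comp h', ?_⟩
  ext x
  have := DFunLike.congr_fun hh x
  exact this

lemma dq_exact {A B C : Type u} [AddCommGroup A] [AddCommGroup B] [AddCommGroup C]
    (f : A →+ B) (g : B →+ C) (h : Function.Exact f g) (u : B →+ DQ.{u}) (hu : u.comp f = 0) :
    ∃ w : C →+ DQ.{u}, w.comp g = u := by
  have hk : g.ker ≤ u.ker := by
    intro x hx
    obtain ⟨a, rfl⟩ := (h x).1 hx
    exact DFunLike.congr_fun hu a
  obtain ⟨w, hw⟩ := dq_extend (A := B ⧸ g.ker) (QuotientAddGroup.kerLift g)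
    (QuotientAddGroup.kerLift_injective g) (QuotientAddGroup.lift g.ker u hk)
  refine ⟨w, ?_⟩
  ext x
  have := DFunLike.congr_fun hw (QuotientAddGroup.mk x)
  exact congrArg ULift.down this

lemma precomp_exact {R : Type u} [Ring R] {A B C : Type u} [AddCommGroup A] [AddCommGroup B]
    [AddCommGroup C] [Module R A] [Module R B] [Module R C]
    (f : A →ₗ[R] B) (g : B →ₗ[R] C) (h : Function.Exact f g) :
    Function.Exact (precompHom (G := DQ.{u}) g) (precompHom (G := DQ.{u}) f) := by
  intro u
  constructor
  · intro hu
    obtain ⟨w, hw⟩ := dq_exact f.toAddMonoidHom g.toAddMonoidHom h u hu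
    exact ⟨w, hw⟩
  · rintro ⟨w, rfl⟩
    refine AddMonoidHom.ext fun a => ?_
    change w (g (f a)) = 0
    rw [h.apply_apply_eq_zero, map_zero]

lemma precomp_injective {R : Type u} [Ring R] {B C : Type u} [AddCommGroup B]
    [AddCommGroup C] [Module R B] [Module R C]
    (g : B →ₗ[R] C) (h : Function.Surjective g) :
    Function.Injective (precompHom (G := DQ.{u}) g) := by
  intro u v huv
  refine AddMonoidHom.ext fun c => ?_
  obtain ⟨b, rfl⟩ := h c
  exact DFunLike.congr_fun huv b

section Adj

variable {R : Type u} [Ring R] {E : Type u} [AddCommGroup E] [Module Rᵐᵒᵖ E]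
  {M : Type u} [AddCommGroup M] [Module R M]

lemma nc_uncurry (u : E →ₗ[Rᵐᵒᵖ] (M →+ DQ.{u})) :
    ∃ t : NcTensor R E M →+ DQ.{u}, ∀ e m, t (NcTensor.tmul R E M e m) = u e m := by
  let b : E →ₗ[ℤ] M →ₗ[ℤ] DQ.{u} :=
    (AddMonoidHom.mk' (fun e => (u e).toIntLinearMap) (fun a b => by
      ext m; simp)).toIntLinearMap
  have hb : ncRel R E M ≤ LinearMap.ker (TensorProduct.lift b) := by
    refine Submodule.span_le.2 ?_
    rintro z ⟨e, r, m, rfl⟩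
    change TensorProduct.lift b _ = 0
    rw [map_sub, TensorProduct.lift.tmul, TensorProduct.lift.tmul]
    change u (MulOpposite.op r • e) m - u e (r • m) = 0
    rw [map_smul]
    exact sub_self _
  exact ⟨((ncRel R E M).liftQ (TensorProduct.lift b) hb).toAddMonoidHom, fun e m => rfl⟩

lemma nc_curry (t : NcTensor R E M →+ DQ.{u}) :
    ∃ u : E →ₗ[Rᵐᵒᵖ] (M →+ DQ.{u}), ∀ e m, u e m = t (NcTensor.tmul R E M e m) := by
  refine ⟨{ toFun := fun e => AddMonoidHom.mk' (fun m => t (NcTensor.tmul R E M e m)) ?_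
            map_add' := ?_
            map_smul' := ?_ }, ?_⟩
  · intro a b
    rw [← map_add]
    congr 1
    unfold NcTensor.tmul
    rw [TensorProduct.tmul_add]
    rfl
  · intro a b
    refine AddMonoidHom.ext fun m => ?_
    change t _ = t _ + t _
    rw [← map_add]
    congr 1
    unfold NcTensor.tmul
    rw [TensorProduct.add_tmul]
    rfl
  · intro r e
    refine AddMonoidHom.ext fun m => ?_
    change t _ = t _
    congr 1
    refine (Submodule.Quotient.eq _).2 (Submodule.subset_span ⟨e, r.unop, m, ?_⟩)
    rfl
  · intro e m
    rfl

lemma nc_ext {t t' : NcTensor R E M →+ DQ.{u}}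
    (h : ∀ e m, t (NcTensor.tmul R E M e m) = t' (NcTensor.tmul R E M e m)) : t = t' := by
  refine AddMonoidHom.ext fun x => ?_
  obtain ⟨y, rfl⟩ := Submodule.Quotient.mk_surjective _ x
  induction y using TensorProduct.induction_on with
  | zero => exact (map_zero t).trans (map_zero t').symm
  | tmul e m => exact h e m
  | add a b ha hb =>
    exact (map_add t _ _).trans ((congrArg₂ (· + ·) ha hb).trans (map_add t' _ _).symm)

end Adj

lemma flat_char_injective (R : Type u) [Ring R] (F : ModuleCat.{u} R) (hF : IsFlatModule R F) :
    Injective (ModuleCat.of Rᵐᵒᵖ (F →+ DQ.{u})) := by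
  constructor
  intro E E' g f hf
  have hinj := hF E E' f ((ModuleCat.mono_iff_injective f).1 hf)
  obtain ⟨t, ht⟩ := nc_uncurry (R := R) (E := E) (M := F) g.hom
  obtain ⟨t', ht'⟩ := dq_extend (NcTensor.map R f.hom (LinearMap.id (M := F))).toAddMonoidHom hinj t
  obtain ⟨u, hu⟩ := nc_curry (R := R) (E := E') (M := F) t'
  refine ⟨ModuleCat.ofHom u, ?_⟩
  ext e : 2
  refine AddMonoidHom.ext fun m => ?_
  change u (f.hom e) m = g.hom e m
  rw [hu, ← ht, ← ht']
  rfl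

lemma hom_exact (R : Type u) [Ring R] {A B C : ModuleCat.{u} R} (E : ModuleCat.{u} Rᵐᵒᵖ)
    (f : A →ₗ[R] B) (g : B →ₗ[R] C)
    (h : Function.Exact (NcTensor.map R (LinearMap.id (M := ↑E)) f)
      (NcTensor.map R (LinearMap.id (M := ↑E)) g)) (hfg : ∀ a, g (f a) = 0) :
    Function.Exact
      (fun k : E ⟶ ModuleCat.of Rᵐᵒᵖ (C →+ DQ.{u}) =>
        k ≫ ModuleCat.ofHom (precompHom (G := DQ.{u}) g))
      (fun k : E ⟶ ModuleCat.of Rᵐᵒᵖ (B →+ DQ.{u}) =>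
        k ≫ ModuleCat.ofHom (precompHom (G := DQ.{u}) f)) := by
  intro k
  constructor
  · intro hk
    obtain ⟨t, ht⟩ := nc_uncurry (R := R) (E := E) (M := B) k.hom
    obtain ⟨w, hw⟩ := dq_exact (NcTensor.map R (LinearMap.id (M := ↑E)) f).toAddMonoidHom
      (NcTensor.map R (LinearMap.id (M := ↑E)) g).toAddMonoidHom h t (by
        refine nc_ext fun e m => ?_
        change t (NcTensor.tmul R E B e (f m)) = 0
        rw [ht]
        have := LinearMap.congr_fun (congrArg ModuleCat.Hom.hom hk) e
        exact DFunLike.congr_fun (F := A →+ DQ.{u}) this m)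
    obtain ⟨u, hu⟩ := nc_curry (R := R) (E := E) (M := C) w
    refine ⟨ModuleCat.ofHom u, ?_⟩
    ext e : 2
    refine AddMonoidHom.ext fun m => ?_
    change u e (g m) = k.hom e m
    rw [hu, ← ht, ← hw]
    rfl
  · rintro ⟨k, rfl⟩
    ext e : 2
    refine AddMonoidHom.ext fun m => ?_
    change (k.hom e : C →+ DQ.{u}) (g (f m)) = 0
    rw [hfg, map_zero]

/-- The differential with flexible indices. -/
def dd {A : Type*} [Category A] {F : ℤ → A} (d : ∀ n : ℤ, F n ⟶ F (n + 1)) (k l : ℤ)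
    (h : k + 1 = l) : F k ⟶ F l := d k ≫ eqToHom (by rw [h])

lemma char_kernel_iso {R : Type u} [Ring R] {A B C : ModuleCat.{u} R}
    {Y : ModuleCat.{u} Rᵐᵒᵖ} (g : B →ₗ[R] C) (hg : Function.Surjective g)
    (k : ModuleCat.of Rᵐᵒᵖ (B →+ DQ.{u}) ⟶ Y)
    (h : Function.Exact (precompHom (G := DQ.{u}) g) k.hom) :
    Nonempty (ModuleCat.of Rᵐᵒᵖ (C →+ DQ.{u}) ≅ kernel k) := by
  let ι : ModuleCat.of Rᵐᵒᵖ (C →+ DQ.{u}) ⟶ ModuleCat.of Rᵐᵒᵖ (B →+ DQ.{u}) :=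
    ModuleCat.ofHom (precompHom (G := DQ.{u}) g)
  have w : ι ≫ k = 0 := by
    ext x
    exact h.apply_apply_eq_zero x
  have : Mono ι := (ModuleCat.mono_iff_injective ι).2 (precomp_injective g hg)
  have hex : (ShortComplex.mk ι k w).Exact :=
    (ShortComplex.ShortExact.moduleCat_exact_iff_function_exact _).2 h
  exact ⟨IsLimit.conePointUniqueUpToIso hex.fIsKernel (limit.isLimit _)⟩

lemma gf_char (R : Type u) [Ring R] (M : ModuleCat.{u} R) (hM : IsGorensteinFlatModule R M) :
    IsGorensteinInjective (ModuleCat.of Rᵐᵒᵖ (M →+ DQ.{u})) := by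
  obtain ⟨F, d, hF, hex, ⟨e⟩, hE⟩ := hM
  have hex' : ∀ (k l m : ℤ) (h : k + 1 = l) (h' : l + 1 = m),
      Function.Exact (dd d k l h).hom (dd d l m h').hom := by
    intro k l m h h'
    subst h h'
    simpa [dd] using hex k
  have hE' : ∀ (E : ModuleCat.{u} Rᵐᵒᵖ), Injective E → ∀ (k l m : ℤ) (h : k + 1 = l) (h' : l + 1 = m),
      Function.Exact (NcTensor.map R (LinearMap.id (M := ↑E)) (dd d k l h).hom)
        (NcTensor.map R (LinearMap.id (M := ↑E)) (dd d l m h').hom) := by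
    intro E hEi k l m h h'
    subst h h'
    simpa [dd] using hE E hEi k
  refine ⟨fun n => ModuleCat.of Rᵐᵒᵖ (F (-1 - n) →+ DQ.{u}),
    fun n => ModuleCat.ofHom (precompHom (G := DQ.{u}) (dd d (-1 - (n + 1)) (-1 - n) (by ring)).hom),
    fun n => flat_char_injective R _ (hF _), fun n => ?_, ?_, fun E hEi n => ?_⟩
  · have h1 := precomp_exact _ _ (hex' (-1 - (n + 1 + 1)) (-1 - (n + 1)) (-1 - n) (by ring) (by ring))
    refine ⟨?_, (ShortComplex.ShortExact.moduleCat_exact_iff_function_exact _).2 h1⟩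
    ext x : 2
    exact h1.apply_apply_eq_zero x
  · have h0 : dd d 0 (0 + 1) rfl = d 0 := by simp [dd]
    have ha := hex' (-1) 0 (0 + 1) (by norm_num) rfl
    rw [h0] at ha
    let q0 : F (-1 - 0) →ₗ[R] LinearMap.ker (d 0).hom :=
      LinearMap.codRestrict _ (dd d (-1 - 0) 0 (by norm_num)).hom (fun x => ha.apply_apply_eq_zero x)
    let q : F (-1 - 0) →ₗ[R] M := e.symm.toLinearMap.comp q0
    have hq : Function.Surjective q := by
      refine e.symm.surjective.comp ?_
      rintro ⟨y, hy⟩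
      obtain ⟨x, hx⟩ := (ha y).1 hy
      exact ⟨x, Subtype.ext hx⟩
    have hb := hex' (-1 - (0 + 1)) (-1 - 0) 0 (by norm_num) (by norm_num)
    have hbq : Function.Exact (dd d (-1 - (0 + 1)) (-1 - 0) (by norm_num)).hom q := by
      intro x
      rw [← hb x]
      change e.symm (q0 x) = 0 ↔ _
      rw [LinearEquiv.map_eq_zero_iff, Subtype.ext_iff]
      rfl
    exact char_kernel_iso (A := F 0) q hq _ (precomp_exact _ _ hbq)
  · refine hom_exact R E _ _ (hE' E hEi (-1 - (n + 1 + 1)) (-1 - (n + 1)) (-1 - n) (by ring) (by ring)) ?_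
    exact (hex' (-1 - (n + 1 + 1)) (-1 - (n + 1)) (-1 - n) (by ring) (by ring)).apply_apply_eq_zero

lemma gi_iso {A : Type*} [Category A] [Abelian A] {M N : A} (e : N ≅ M)
    (h : IsGorensteinInjective M) : IsGorensteinInjective N := by
  obtain ⟨I, d, h1, h2, ⟨i⟩, h3⟩ := h
  exact ⟨I, d, h1, h2, ⟨e ≪≫ i⟩, h3⟩

/-- The linear map to the coinduced module attached to an additive map. -/
def hat {R : Type u} [Ring R] {M : Type u} [AddCommGroup M] [Module R M] (g : M →+ DQ.{u}) :
    M →ₗ[R] (R →+ DQ.{u}) where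
  toFun m := g.comp ((AddMonoidHom.flip (smulAddHom R M)) m)
  map_add' a b := by
    refine AddMonoidHom.ext fun s => ?_
    change g (s • (a + b)) = g (s • a) + g (s • b)
    rw [smul_add, map_add]
  map_smul' r a := by
    refine AddMonoidHom.ext fun s => ?_
    change g (s • (r • a)) = g ((s * r) • a)
    rw [mul_smul]

lemma coprod_lift {R : Type u} [Ring R] {J : Type u} (Z : J → ModuleCat.{u} R)
    (g : ∀ j, Z j →+ DQ.{u}) :
    ∃ G : (∐ Z : ModuleCat.{u} R) →+ DQ.{u}, ∀ j x, G ((Sigma.ι Z j).hom x) = g j x := by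
  let T : ModuleCat.{u} R := ModuleCat.of R (R →+ DQ.{u})
  let h : (∐ Z : ModuleCat.{u} R) ⟶ T := Sigma.desc fun j => ModuleCat.ofHom (hat (R := R) (g j))
  refine ⟨(AddMonoidHom.eval (1 : R)).comp h.hom.toAddMonoidHom, fun j x => ?_⟩
  have := LinearMap.congr_fun (congrArg ModuleCat.Hom.hom
    (Sigma.ι_desc (fun j => (ModuleCat.ofHom (hat (R := R) (g j)) : Z j ⟶ T)) j)) x
  refine (DFunLike.congr_fun (F := R →+ DQ.{u}) this 1).trans ?_
  change g j ((1 : R) • x) = g j x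
  rw [one_smul]

lemma coprod_ext {R : Type u} [Ring R] {J : Type u} (Z : J → ModuleCat.{u} R)
    (G : (∐ Z : ModuleCat.{u} R) →+ DQ.{u}) (h : ∀ j x, G ((Sigma.ι Z j).hom x) = 0) : G = 0 := by
  have h0 : (ModuleCat.ofHom (hat (R := R) G) :
      (∐ Z : ModuleCat.{u} R) ⟶ ModuleCat.of R (R →+ DQ.{u})) = 0 := by
    refine Sigma.hom_ext _ _ fun j => ?_
    ext x : 2
    refine AddMonoidHom.ext fun s => ?_
    change G (s • (Sigma.ι Z j).hom x) = 0
    rw [← map_smul, h]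
  refine AddMonoidHom.ext fun x => ?_
  have := DFunLike.congr_fun (F := R →+ DQ.{u}) (LinearMap.congr_fun (congrArg ModuleCat.Hom.hom h0) x) 1
  change G ((1 : R) • x) = 0 at this
  rwa [one_smul] at this

section Main

variable {R : Type u} [Ring R] {V : Type u} [Quiver.{u} V] (X : RepL V R)

lemma psi_comp (i : Vᵒᵖ) (p : Σ j : Vᵒᵖ, i ⟶ j) (f : X.obj (vtx' i.unop) →+ DQ.{u}) :
    (Pi.π (fun p : Σ j : Vᵒᵖ, i ⟶ j => (charRep V R X).obj (vtx p.1)) p).hom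
      ((psi (charRep V R X) i).hom f) =
      precompHom (G := DQ.{u}) (X.map p.2.unop.toPath).hom f := by
  have h1 : psi (charRep V R X) i ≫ Pi.π _ p = (charRep V R X).map p.2.toPath := by
    simp [psi]
  have h2 := LinearMap.congr_fun (congrArg ModuleCat.Hom.hom h1) f
  refine h2.trans ?_
  have h3 : (charRep V R X).map p.2.toPath = ModuleCat.ofHom
      (precompHom (G := DQ.{u}) (X.map p.2.unop.toPath).hom) := by
    exact Paths.lift_toPath _ _
  exact LinearMap.congr_fun (congrArg ModuleCat.Hom.hom h3) f

lemma phi_comp (i : V) (p : Σ j : V, j ⟶ i) (x : X.obj (vtx p.1)) :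
    (phi X i).hom ((Sigma.ι (fun p : Σ j : V, j ⟶ i => X.obj (vtx p.1)) p).hom x) =
      (X.map p.2.toPath).hom x := by
  have h1 : Sigma.ι (fun p : Σ j : V, j ⟶ i => X.obj (vtx p.1)) p ≫ phi X i
      = X.map p.2.toPath := by
    simp [phi]
  exact LinearMap.congr_fun (congrArg ModuleCat.Hom.hom h1) x

lemma prod_ext {S : Type u} [Ring S] {J : Type u} (Z : J → ModuleCat.{u} S)
    (x y : (∏ᶜ Z : ModuleCat.{u} S)) (h : ∀ j, (Pi.π Z j).hom x = (Pi.π Z j).hom y) : x = y := by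
  refine Concrete.limit_ext (Discrete.functor Z) x y ?_
  rintro ⟨j⟩
  exact h j

lemma psi_surj (i : Vᵒᵖ) (h : Mono (phi X i.unop)) :
    Function.Surjective (psi (charRep V R X) i).hom := by
  intro y
  let g : ∀ p : Σ j : V, j ⟶ i.unop, X.obj (vtx p.1) →+ DQ.{u} := fun p =>
    (Pi.π (fun p : Σ j : Vᵒᵖ, i ⟶ j => (charRep V R X).obj (vtx p.1)) ⟨op p.1, p.2.op⟩).hom y
  obtain ⟨G, hG⟩ := coprod_lift _ g
  obtain ⟨f, hf⟩ := dq_extend (phi X i.unop).hom.toAddMonoidHom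
    ((ModuleCat.mono_iff_injective _).1 h) G
  refine ⟨f, prod_ext _ _ _ ?_⟩
  rintro ⟨j, a⟩
  rw [psi_comp]
  refine AddMonoidHom.ext fun x => ?_
  have h1 := hG ⟨j.unop, a.unop⟩ x
  rw [← hf] at h1
  refine Eq.trans ?_ h1
  exact (congrArg f (phi_comp X i.unop ⟨j.unop, a.unop⟩ x)).symm

lemma psi_exact (i : Vᵒᵖ) :
    Function.Exact (precompHom (G := DQ.{u}) (cokernel.π (phi X i.unop)).hom)
      (psi (charRep V R X) i).hom := by
  have hc : Function.Exact (phi X i.unop).hom (cokernel.π (phi X i.unop)).hom :=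
    (ShortComplex.ShortExact.moduleCat_exact_iff_function_exact _).1
      (ShortComplex.exact_cokernel (phi X i.unop))
  have hp := precomp_exact _ _ hc
  intro (f : X.obj (vtx' i.unop) →+ DQ.{u})
  rw [← hp f]
  constructor
  · intro h
    refine coprod_ext _ _ ?_
    rintro ⟨j, a⟩ x
    have h1 := psi_comp X i ⟨op j, a.op⟩ f
    rw [h, map_zero] at h1
    have h2 := DFunLike.congr_fun (F := X.obj (vtx' j) →+ DQ.{u}) h1 x
    exact (congrArg f (phi_comp X i.unop ⟨j, a⟩ x)).trans h2.symm
  · intro h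
    refine prod_ext _ _ _ ?_
    rintro ⟨j, a⟩
    rw [psi_comp, map_zero]
    refine AddMonoidHom.ext fun x => ?_
    refine (congrArg f (phi_comp X i.unop ⟨j.unop, a.unop⟩ x)).symm.trans ?_
    exact DFunLike.congr_fun h _

end Main

end Helpers

end QuiverGF

section Statements

open CategoryTheory CategoryTheory.Limits Opposite QuiverGF
open scoped DirectSum

theorem stmt13 (R : Type u) [Ring R] (V : Type u) [Quiver.{u} V] (X : RepL V R)
    (hX : X ∈ PhiClass (V := V) {M : ModuleCat.{u} R | IsGorensteinFlatModule R M}) :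
    charRep V R X ∈ PsiClass (V := Vᵒᵖ) {N : ModuleCat.{u} Rᵐᵒᵖ | IsGorensteinInjective N} := by
  intro i
  obtain ⟨hm, hv, hc⟩ := hX i.unop
  refine ⟨(ModuleCat.epi_iff_surjective _).2 (psi_surj X i hm), gf_char R _ hv, ?_⟩
  obtain ⟨e⟩ := char_kernel_iso (A := X.obj (vtx i.unop)) (cokernel.π (phi X i.unop)).hom
    ((ModuleCat.epi_iff_surjective _).1 inferInstance) (psi (charRep V R X) i) (psi_exact X i)
  exact gi_iso e.symm (gf_char R _ hc)

end Statements
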